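/- There exist directed-complete partial orders (dcpos) X₁ and X₂ such that the Scott topology on the product X₁ × X₂ (equipped with the componentwise partial order) is strictly finer than the product topology of the Scott topology on X₁ and the Scott topology on X₂. -/

import Mathlib

/-- A dcpo: a partially ordered set in which every (nonempty) directed subset has a least
upper bound. -/
def IsDcpo (X : Type) [PartialOrder X] : Prop :=
  ∀ d : Set X, d.Nonempty → DirectedOn (· ≤ ·) d → ∃ a, IsLUB d a

/-- The Scott topology on `X₁ × X₂` (with the componentwise order) is strictly finer than the
product topology of the Scott topologies on the factors. -/
def ScottStrictlyFinerThanProd (X₁ X₂ : Type) [Preorder X₁] [Preorder X₂] : Prop :=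
  (∀ U : Set (X₁ × X₂),
      (@instTopologicalSpaceProd X₁ X₂ (Topology.scott X₁ Set.univ)
        (Topology.scott X₂ Set.univ)).IsOpen U →
      (Topology.scott (X₁ × X₂) Set.univ).IsOpen U) ∧
  ∃ U : Set (X₁ × X₂), (Topology.scott (X₁ × X₂) Set.univ).IsOpen U ∧
    ¬ (@instTopologicalSpaceProd X₁ X₂ (Topology.scott X₁ Set.univ)
        (Topology.scott X₂ Set.univ)).IsOpen U

theorem scott_open_iff {X : Type} [Preorder X] (U : Set X) :
    (Topology.scott X Set.univ).IsOpen U ↔ IsUpperSet U ∧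
      ∀ d : Set X, d.Nonempty → DirectedOn (· ≤ ·) d → ∀ a, IsLUB d a → a ∈ U →
        ∃ b ∈ d, b ∈ U := by
  let _ : TopologicalSpace X := Topology.scott X Set.univ
  have : Topology.IsScott X Set.univ := ⟨rfl⟩
  have h := Topology.IsScott.isOpen_iff_isUpperSet_and_dirSupInaccOn (D := Set.univ) (s := U)
  refine Iff.trans h (and_congr_right fun _ => ?_)
  constructor
  · intro h d h1 h2 a h3 h4
    exact h trivial h1 h2 h3 h4
  · intro h d _ h1 h2 a h3 h4
    exact h d h1 h2 a h3 h4

theorem prod_open_iff {X Y : Type} [Preorder X] [Preorder Y] (U : Set (X × Y)) :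
    (@instTopologicalSpaceProd X Y (Topology.scott X Set.univ)
        (Topology.scott Y Set.univ)).IsOpen U ↔
    ∀ a b, (a, b) ∈ U → ∃ u v, (Topology.scott X Set.univ).IsOpen u ∧
      (Topology.scott Y Set.univ).IsOpen v ∧ a ∈ u ∧ b ∈ v ∧ u ×ˢ v ⊆ U := by
  let _ : TopologicalSpace X := Topology.scott X Set.univ
  let _ : TopologicalSpace Y := Topology.scott Y Set.univ
  exact isOpen_prod_iff

theorem prod_le_scott {X Y : Type} [Preorder X] [Preorder Y] (U : Set (X × Y))
    (hU : (@instTopologicalSpaceProd X Y (Topology.scott X Set.univ)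
        (Topology.scott Y Set.univ)).IsOpen U) :
    (Topology.scott (X × Y) Set.univ).IsOpen U := by
  rw [prod_open_iff] at hU
  rw [scott_open_iff]
  constructor
  · rintro ⟨a, b⟩ ⟨a', b'⟩ hab h
    obtain ⟨u, v, hu, hv, ha, hb, huv⟩ := hU a b h
    rw [scott_open_iff] at hu hv
    exact huv ⟨hu.1 hab.1 ha, hv.1 hab.2 hb⟩
  · rintro d hne hd ⟨a, b⟩ hlub h
    obtain ⟨u, v, hu, hv, ha, hb, huv⟩ := hU a b h
    rw [scott_open_iff] at hu hv
    rw [isLUB_prod] at hlub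
    obtain ⟨_, ⟨p, hp, rfl⟩, hpu⟩ := hu.2 (Prod.fst '' d) (hne.image _)
      (directedOn_image.2 (hd.mono fun _ _ h => h.1)) a hlub.1 ha
    obtain ⟨_, ⟨q, hq, rfl⟩, hqv⟩ := hv.2 (Prod.snd '' d) (hne.image _)
      (directedOn_image.2 (hd.mono fun _ _ h => h.2)) b hlub.2 hb
    obtain ⟨r, hr, h1, h2⟩ := hd p hp q hq
    exact ⟨r, hr, huv ⟨hu.1 h1.1 hpu, hv.1 h2.2 hqv⟩⟩

abbrev XA : Type := WithTop (Σ _ : ℕ, ℕ)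
abbrev XB : Type := (ℕ → ℕ)ᵒᵈ

def pt (i n : ℕ) : XA := ((⟨i, n⟩ : Σ _ : ℕ, ℕ) : XA)

theorem pt_le {i n j m : ℕ} : pt i n ≤ pt j m ↔ i = j ∧ n ≤ m := by
  unfold pt
  rw [WithTop.coe_le_coe]
  constructor
  · rintro ⟨⟩
    exact ⟨rfl, by assumption⟩
  · rintro ⟨rfl, h⟩
    exact Sigma.LE.fiber _ _ _ h

theorem XA_cases (x : XA) : x = ⊤ ∨ ∃ i n, x = pt i n := by
  induction x using WithTop.recTopCoe with
  | top => exact Or.inl rfl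
  | coe a => exact Or.inr ⟨a.1, a.2, rfl⟩

theorem chain_lub (d : Set XA) (i : ℕ) (h : ∀ N, ∃ n, N ≤ n ∧ pt i n ∈ d) : IsLUB d ⊤ := by
  refine ⟨fun _ _ => le_top, fun y hy => ?_⟩
  rcases XA_cases y with rfl | ⟨j, m, rfl⟩
  · exact le_rfl
  · obtain ⟨n, hn, hd⟩ := h (m + 1)
    have := (pt_le.1 (hy hd)).2
    omega

theorem XA_dir (d : Set XA) (hne : d.Nonempty) (hd : DirectedOn (· ≤ ·) d) :
    (∃ g, IsGreatest d g) ∨ ∃ i, ∀ N, ∃ n, N ≤ n ∧ pt i n ∈ d := by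
  by_cases ht : ⊤ ∈ d
  · exact Or.inl ⟨⊤, ht, fun _ _ => le_top⟩
  obtain ⟨x, hx⟩ := hne
  rcases XA_cases x with rfl | ⟨i, n, rfl⟩
  · exact absurd hx ht
  have key : ∀ y ∈ d, ∃ m, y = pt i m := by
    intro y hy
    obtain ⟨z, hz, h1, h2⟩ := hd _ hx y hy
    rcases XA_cases z with rfl | ⟨j, m, rfl⟩
    · exact absurd hz ht
    rcases XA_cases y with rfl | ⟨k, l, rfl⟩
    · exact absurd hy ht
    have e1 := (pt_le.1 h1).1
    have e2 := (pt_le.1 h2).1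
    exact ⟨l, by rw [e1, e2]⟩
  by_cases hb : ∀ N, ∃ n, N ≤ n ∧ pt i n ∈ d
  · exact Or.inr ⟨i, hb⟩
  left
  push Not at hb
  obtain ⟨N, hN⟩ := hb
  have hbd : BddAbove {m | pt i m ∈ d} := ⟨N, fun m hm => by
    by_contra hc
    exact hN m (by omega) hm⟩
  have hmem := Nat.sSup_mem (s := {m | pt i m ∈ d}) ⟨n, hx⟩ hbd
  refine ⟨pt i (sSup {m | pt i m ∈ d}), hmem, fun y hy => ?_⟩
  obtain ⟨m, rfl⟩ := key y hy
  exact pt_le.2 ⟨rfl, le_csSup hbd hy⟩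

theorem XA_dcpo : IsDcpo XA := by
  intro d hne hd
  rcases XA_dir d hne hd with ⟨g, hg⟩ | ⟨i, hi⟩
  · exact ⟨g, hg.isLUB⟩
  · exact ⟨⊤, chain_lub d i hi⟩

theorem XB_lub (d : Set XB) (hne : d.Nonempty) :
    ∃ a : ℕ → ℕ, IsLUB d (OrderDual.toDual a) ∧
      ∀ i, ∃ k ∈ d, OrderDual.ofDual k i = a i := by
  have hm : ∀ i, ∃ k ∈ d, OrderDual.ofDual k i = sInf ((fun k : XB => OrderDual.ofDual k i) '' d) :=
    fun i => Nat.sInf_mem (hne.image (fun k : XB => OrderDual.ofDual k i))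
  refine ⟨fun i => sInf ((fun k : XB => OrderDual.ofDual k i) '' d), ⟨?_, ?_⟩, hm⟩
  · intro k hk i
    exact Nat.sInf_le ⟨k, hk, rfl⟩
  · intro y hy i
    obtain ⟨k, hk, e⟩ := hm i
    change sInf _ ≥ _
    rw [← e]
    exact hy hk i

theorem XB_dcpo : IsDcpo XB := fun d hne _ =>
  let ⟨a, h, _⟩ := XB_lub d hne
  ⟨_, h⟩

def UU : Set (XA × XB) := {p | ∃ i n, pt i n ≤ p.1 ∧ OrderDual.ofDual p.2 i ≤ n}

theorem UU_open : (Topology.scott (XA × XB) Set.univ).IsOpen UU := by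
  rw [scott_open_iff]
  constructor
  · rintro p q hpq ⟨i, n, h1, h2⟩
    exact ⟨i, n, h1.trans hpq.1, le_trans (hpq.2 i) h2⟩
  · rintro d hne hd ⟨x, f⟩ hlub ⟨i, n, h1, h2⟩
    rw [isLUB_prod] at hlub
    obtain ⟨a, ha, hatt⟩ := XB_lub (Prod.snd '' d) (hne.image _)
    have hfa : f = OrderDual.toDual a := hlub.2.unique ha
    dsimp only at h1 h2
    rw [hfa] at h2
    have fin : ∀ j m, a j ≤ m → (∃ q ∈ d, pt j m ≤ q.1) → ∃ b ∈ d, b ∈ UU := by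
      rintro j m hjm ⟨q, hq, hq1⟩
      obtain ⟨_, ⟨p, hp, rfl⟩, e⟩ := hatt j
      obtain ⟨r, hr, h3, h4⟩ := hd p hp q hq
      refine ⟨r, hr, j, m, hq1.trans h4.1, ?_⟩
      exact le_trans (h3.2 j) (e.le.trans hjm)
    rcases XA_dir (Prod.fst '' d) (hne.image _) (directedOn_image.2 (hd.mono fun _ _ h => h.1)) with
      ⟨g, hg⟩ | ⟨j, hj⟩
    · have e : g = x := hg.isLUB.unique hlub.1
      subst e
      obtain ⟨⟨q, hq, e⟩, _⟩ := hg
      exact fin i n h2 ⟨q, hq, by rw [e]; exact h1⟩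
    · obtain ⟨m, hm, q, hq, e⟩ := hj (a j)
      exact fin j m hm ⟨q, hq, e.ge⟩

theorem UU_not_open : ¬ (@instTopologicalSpaceProd XA XB (Topology.scott XA Set.univ)
    (Topology.scott XB Set.univ)).IsOpen UU := by
  rw [prod_open_iff]
  intro h
  obtain ⟨W, H, hW, hH, hT, h0, hsub⟩ := h ⊤ (OrderDual.toDual fun _ => 0)
    ⟨0, 0, le_top, le_rfl⟩
  rw [scott_open_iff] at hW hH
  have hg : ∀ i, ∃ n, pt i n ∈ W := by
    intro i
    obtain ⟨_, ⟨n, rfl⟩, hn⟩ := hW.2 (Set.range (pt i)) ⟨_, 0, rfl⟩ (by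
      rintro _ ⟨n, rfl⟩ _ ⟨m, rfl⟩
      exact ⟨pt i (max n m), ⟨_, rfl⟩, pt_le.2 ⟨rfl, le_max_left _ _⟩,
        pt_le.2 ⟨rfl, le_max_right _ _⟩⟩) ⊤ (chain_lub _ i fun N => ⟨N, le_rfl, N, rfl⟩) hT
    exact ⟨n, hn⟩
  choose g hg using hg
  let s : ℕ → XB := fun k => OrderDual.toDual fun i => if i < k then 0 else g i + 1
  have hs : Monotone s := by
    intro k l hkl i
    change (if i < l then 0 else g i + 1) ≤ (if i < k then 0 else g i + 1)
    split_ifs <;> omega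
  obtain ⟨_, ⟨k, rfl⟩, hk⟩ := hH.2 (Set.range s) ⟨_, 0, rfl⟩ (by
      rintro _ ⟨n, rfl⟩ _ ⟨m, rfl⟩
      exact ⟨s (max n m), ⟨_, rfl⟩, hs (le_max_left _ _), hs (le_max_right _ _)⟩)
      (OrderDual.toDual fun _ => 0) ⟨by
        rintro _ ⟨n, rfl⟩ i
        exact Nat.zero_le _, by
        intro y hy i
        have := hy ⟨i + 1, rfl⟩ i
        change OrderDual.ofDual y i ≤ (if i < i + 1 then 0 else g i + 1) at this
        rw [if_pos (Nat.lt_succ_self i)] at this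
        exact this⟩ h0
  obtain ⟨i, n, h1, h2⟩ := hsub (Set.mk_mem_prod (hg k) hk)
  obtain ⟨rfl, h3⟩ := pt_le.1 h1
  change (if i < i then 0 else g i + 1) ≤ n at h2
  rw [if_neg (lt_irrefl i)] at h2
  omega

theorem stmt_4 : ∃ (X₁ X₂ : Type) (p₁ : PartialOrder X₁) (p₂ : PartialOrder X₂),
    @IsDcpo X₁ p₁ ∧ @IsDcpo X₂ p₂ ∧
    @ScottStrictlyFinerThanProd X₁ X₂ p₁.toPreorder p₂.toPreorder :=
  ⟨XA, XB, inferInstance, inferInstance, XA_dcpo, XB_dcpo, prod_le_scott, UU, UU_open, UU_not_open⟩
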